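/- arXiv:1212.1879 — 8 statements merged into one kernel-verified Lean document; each statement's English description precedes it below -/
import Mathlib

section
/- Let T be a pretriangulated category (additive, with shift by ℤ and a class of distinguished triangles) in which all countable coproducts exist. Let S be a full subcategory of T that is closed under isomorphisms, closed under the shift functor in both directions, closed under extensions (for any distinguished triangle X → Y → Z → X[1], if X and Z lie in S then so does Y), and closed under countable coproducts (the coproduct in T of any countable family of objects of S again lies in S). Then S is closed under direct summands: if an object of T of the form X ⊕ Y lies in S, then X lies in S. -/
open CategoryTheory Limits Pretriangulated

universe v u

/-!
In a pretriangulated category a retract `X` of `Z` has a complement, the cone `Y` of `X ⟶ Z`.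
Let `A` be the coproduct of countably many copies of `X ⊞ Y`. Shifting the copies of `X` by one
place gives `A ⊞ X ≅ A` (the Eilenberg swindle), and rotating the split triangle
`A ⟶ A ⊞ X ⟶ X ⟶ A⟦1⟧` exhibits `X` as an extension of `A⟦1⟧` by `A ⊞ X`.
-/

section Swindle

variable {C : Type u} [Category.{v} C] (X Y : C) [HasBinaryCoproduct X Y]
  [HasCoproduct fun _ : ℕ => X ⨿ Y]

/-- The Eilenberg swindle: a countable copower of `X ⨿ Y` absorbs one more copy of `X`. The `n`-th
copy of `X` moves to place `n + 1`, the extra copy takes place `0`, and no copy of `Y` moves. -/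
noncomputable def sigmaCoprodSwindle [HasBinaryCoproduct (∐ fun _ : ℕ => X ⨿ Y) X] :
    (∐ fun _ : ℕ => X ⨿ Y) ⨿ X ≅ ∐ fun _ : ℕ => X ⨿ Y where
  hom := coprod.desc
    (Sigma.desc fun n => coprod.desc
      (coprod.inl ≫ Sigma.ι (fun _ : ℕ => X ⨿ Y) (n + 1))
      (coprod.inr ≫ Sigma.ι (fun _ : ℕ => X ⨿ Y) n))
    (coprod.inl ≫ Sigma.ι (fun _ : ℕ => X ⨿ Y) 0)
  inv := Sigma.desc fun n => coprod.desc
    (match n with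
      | 0 => coprod.inr
      | m + 1 => coprod.inl ≫ Sigma.ι (fun _ : ℕ => X ⨿ Y) m ≫ coprod.inl)
    (coprod.inr ≫ Sigma.ι (fun _ : ℕ => X ⨿ Y) n ≫ coprod.inl)
  hom_inv_id := by
    ext n <;> simp [coprod.inl_desc, coprod.inr_desc]
  inv_hom_id := by
    ext n
    · cases n <;> simp [coprod.inl_desc, coprod.inr_desc]
    · simp [coprod.inl_desc, coprod.inr_desc]

end Swindle

section Pretriangulated

variable {T : Type u} [Category.{v} T] [HasZeroObject T] [Preadditive T] [HasShift T ℤ]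
  [∀ n : ℤ, (shiftFunctor T n).Additive] [Pretriangulated T]

lemma exists_iso_biprod_of_retract {X Z : T} (r : Retract X Z) :
    ∃ Y : T, Nonempty (Z ≅ X ⊞ Y) := by
  obtain ⟨Y, p, δ, hΔ⟩ := distinguished_cocone_triangle r.i
  have hδ : δ = 0 := Triangle.mor₃_eq_zero_of_mono₁ _ hΔ (inferInstanceAs (Mono r.i))
  obtain ⟨e, -⟩ := exists_iso_binaryBiproduct_of_distTriang _ hΔ hδ
  exact ⟨Y, ⟨e⟩⟩

variable (P : ObjectProperty T) [P.IsClosedUnderIsomorphisms] [P.IsStableUnderShiftBy (1 : ℤ)]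
  [P.IsTriangulatedClosed₂]

lemma prop_right_of_prop_left_of_prop_biprod {A X : T} (hA : P A) (hAX : P (A ⊞ X)) : P X :=
  P.ext_of_isTriangulatedClosed₂ _
    (rot_of_distTriang _ (binaryBiproductTriangle_distinguished A X)) hAX (P.le_shift 1 _ hA)

lemma prop_of_prop_sigma_coprod {X Y : T} [HasCoproduct fun _ : ℕ => X ⨿ Y]
    (h : P (∐ fun _ : ℕ => X ⨿ Y)) : P X :=
  prop_right_of_prop_left_of_prop_biprod P h
    (P.prop_of_iso ((sigmaCoprodSwindle X Y).symm ≪≫ (biprod.isoCoprod _ _).symm) h)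

theorem triangulated_subcategory_closed_under_summands_general
    [∀ Z : T, HasCoproduct fun _ : ℕ => Z]
    (hP : ∀ Z : T, P Z → P (∐ fun _ : ℕ => Z)) : P.IsStableUnderRetracts where
  of_retract {X Z} r hZ := by
    obtain ⟨Y, ⟨e⟩⟩ := exists_iso_biprod_of_retract r
    have hXY : P (X ⨿ Y) := P.prop_of_iso (e ≪≫ biprod.isoCoprod X Y) hZ
    exact prop_of_prop_sigma_coprod P (hP _ hXY)

end Pretriangulated

/-- In a pretriangulated category with countable coproducts, a full subcategory (given by a
class of objects closed under isomorphisms) that is closed under shifts in both directions,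
under extensions, and under countable coproducts, is closed under direct summands. -/
theorem triangulated_subcategory_closed_under_summands
    {T : Type u} [Category.{v} T] [HasZeroObject T] [Preadditive T] [HasShift T ℤ]
    [∀ n : ℤ, (CategoryTheory.shiftFunctor T n).Additive] [Pretriangulated T]
    [HasBinaryBiproducts T]
    (hcoprod : ∀ (ι : Type) [Countable ι] (f : ι → T), HasCoproduct f)
    (S : Set T)
    (hiso : ∀ ⦃X Y : T⦄, (X ≅ Y) → X ∈ S → Y ∈ S)
    (hshift : ∀ X : T, X ∈ S → X⟦(1 : ℤ)⟧ ∈ S)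
    (hshiftneg : ∀ X : T, X ∈ S → X⟦(-1 : ℤ)⟧ ∈ S)
    (hext : ∀ (Δ : Triangle T), Δ ∈ (distTriang T) → Δ.obj₁ ∈ S → Δ.obj₃ ∈ S → Δ.obj₂ ∈ S)
    (hcop : ∀ (ι : Type) [Countable ι] (f : ι → T), (∀ i, f i ∈ S) →
      haveI := hcoprod ι f; (∐ f) ∈ S)
    (X Y : T) (hXY : (X ⊞ Y) ∈ S) : X ∈ S := by
  have : ObjectProperty.IsClosedUnderIsomorphisms (· ∈ S) := ⟨fun e hX => hiso e hX⟩
  have : ObjectProperty.IsStableUnderShiftBy (· ∈ S) (1 : ℤ) := ⟨hshift⟩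
  have : ObjectProperty.IsTriangulatedClosed₂ (· ∈ S) := .mk' hext
  have (Z : T) : HasCoproduct fun _ : ℕ => Z := hcoprod ℕ _
  have := triangulated_subcategory_closed_under_summands_general (· ∈ S)
    fun Z hZ => hcop ℕ _ fun _ => hZ
  exact ObjectProperty.IsStableUnderRetracts.of_biprod_left (· ∈ S) hXY
end

section
/- Let R, R₁, R₂, R' be rings (associative, with identity) and let i₁ : R → R₁, i₂ : R → R₂, j₁ : R₁ → R', j₂ : R₂ → R' be ring homomorphisms such that j₁ ∘ i₁ = j₂ ∘ i₂, both j₁ and j₂ are surjective, and the square is a pullback, i.e. the map r ↦ (i₁(r), i₂(r)) is a bijection from R onto {(a, b) ∈ R₁ × R₂ : j₁(a) = j₂(b)}. Then the square is also a pushout in the category of rings: for every ring U and ring homomorphisms f₁ : R₁ → U, f₂ : R₂ → U with f₁ ∘ i₁ = f₂ ∘ i₂, there exists a unique ring homomorphism g : R' → U with g ∘ j₁ = f₁ and g ∘ j₂ = f₂. -/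
/-! If `j₁ a = j₂ b`, then `a` and `b` come from a common `r : R`, so `f₁ a = f₂ b`. Taking `b = 0`
shows that `f₁` kills the kernel of `j₁`, hence factors as `g ∘ j₁` because `j₁` is surjective.
Lifting `j₂ b` along `j₁` then gives `g (j₂ b) = f₂ b`. -/

theorem existsUnique_ringHom_comp_eq_of_ker_le_ker {A B C : Type*} [NonAssocSemiring A]
    [NonAssocSemiring B] [NonAssocSemiring C] {p : A →+* B} {f : A →+* C}
    (hp : Function.Surjective p) (hker : RingCon.ker p ≤ RingCon.ker f) :
    ∃! g : B →+* C, g.comp p = f := by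
  let e := RingCon.quotientKerEquivOfSurjective p hp
  let g : B →+* C := ((RingCon.ker p).lift f hker).comp e.symm
  have hg : g.comp p = f := RingHom.ext fun a =>
    congrArg ((RingCon.ker p).lift f hker) (e.symm_apply_apply a)
  exact ⟨g, hg, fun g' hg' => (RingHom.cancel_right hp).1 (hg'.trans hg.symm)⟩

theorem ringCon_ker_le_ker_of_map_eq_zero {A B C : Type*} [NonAssocRing A]
    [NonAssocSemiring B] [NonAssocSemiring C] {p : A →+* B} {f : A →+* C}
    (h : ∀ a, p a = 0 → f a = 0) : RingCon.ker p ≤ RingCon.ker f := by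
  intro a a' haa'
  rw [RingCon.ker_apply] at haa' ⊢
  have hp : p (a - a') = 0 := by
    rw [sub_eq_add_neg, map_add, haa', ← map_add, add_neg_cancel, map_zero]
  calc
    f a = f (a - a') + f a' := by rw [← map_add, sub_add_cancel]
    _ = f a' := by rw [h _ hp, zero_add]

theorem map_eq_map_of_fiberProduct_subset_range {R R₁ R₂ R' U : Type*} [NonAssocSemiring R]
    [NonAssocSemiring R₁] [NonAssocSemiring R₂] [NonAssocSemiring R'] [NonAssocSemiring U]
    {i₁ : R →+* R₁} {i₂ : R →+* R₂} {j₁ : R₁ →+* R'} {j₂ : R₂ →+* R'}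
    (hrange : {p : R₁ × R₂ | j₁ p.1 = j₂ p.2} ⊆ Set.range fun r : R => (i₁ r, i₂ r))
    {f₁ : R₁ →+* U} {f₂ : R₂ →+* U} (hf : f₁.comp i₁ = f₂.comp i₂) {a : R₁} {b : R₂}
    (hab : j₁ a = j₂ b) : f₁ a = f₂ b := by
  obtain ⟨r, hr⟩ := hrange (show (a, b) ∈ {p : R₁ × R₂ | j₁ p.1 = j₂ p.2} from hab)
  obtain ⟨rfl, rfl⟩ := Prod.mk.inj hr
  exact RingHom.congr_fun hf r

theorem milnor_square_is_pushout_general {R R₁ R₂ R' U : Type*} [NonAssocSemiring R]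
    [NonAssocRing R₁] [NonAssocSemiring R₂] [NonAssocSemiring R'] [NonAssocSemiring U]
    {i₁ : R →+* R₁} {i₂ : R →+* R₂} {j₁ : R₁ →+* R'} {j₂ : R₂ →+* R'}
    (hj₁ : Function.Surjective j₁)
    (hrange : {p : R₁ × R₂ | j₁ p.1 = j₂ p.2} ⊆ Set.range fun r : R => (i₁ r, i₂ r))
    {f₁ : R₁ →+* U} {f₂ : R₂ →+* U} (hf : f₁.comp i₁ = f₂.comp i₂) :
    ∃! g : R' →+* U, g.comp j₁ = f₁ ∧ g.comp j₂ = f₂ := by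
  have hf_eq {a : R₁} {b : R₂} (hab : j₁ a = j₂ b) : f₁ a = f₂ b :=
    map_eq_map_of_fiberProduct_subset_range hrange hf hab
  have hker : RingCon.ker j₁ ≤ RingCon.ker f₁ := ringCon_ker_le_ker_of_map_eq_zero fun a ha =>
    (hf_eq (ha.trans (map_zero j₂).symm)).trans (map_zero f₂)
  obtain ⟨g, hg, hg_unique⟩ := existsUnique_ringHom_comp_eq_of_ker_le_ker hj₁ hker
  refine ⟨g, ⟨hg, RingHom.ext fun b => ?_⟩, fun g' hg' => hg_unique g' hg'.1⟩
  obtain ⟨a, ha⟩ := hj₁ (j₂ b)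
  calc
    g (j₂ b) = g (j₁ a) := by rw [ha]
    _ = f₁ a := RingHom.congr_fun hg a
    _ = f₂ b := hf_eq ha

/-- A Milnor square (a pullback square of rings with surjective structure maps) is also a
pushout in the category of rings: `R'` is the coproduct `R₁ ⊔_R R₂`. -/
theorem milnor_square_is_pushout
    {R R₁ R₂ R' : Type*} [Ring R] [Ring R₁] [Ring R₂] [Ring R']
    (i₁ : R →+* R₁) (i₂ : R →+* R₂) (j₁ : R₁ →+* R') (j₂ : R₂ →+* R')
    (hcomm : ∀ r : R, j₁ (i₁ r) = j₂ (i₂ r))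
    (hj₁ : Function.Surjective j₁) (hj₂ : Function.Surjective j₂)
    (hinj : Function.Injective (fun r : R => (i₁ r, i₂ r)))
    (hrange : Set.range (fun r : R => (i₁ r, i₂ r)) = {p : R₁ × R₂ | j₁ p.1 = j₂ p.2}) :
    ∀ (U : Type*) [Ring U] (f₁ : R₁ →+* U) (f₂ : R₂ →+* U),
      f₁.comp i₁ = f₂.comp i₂ →
      ∃! g : R' →+* U, g.comp j₁ = f₁ ∧ g.comp j₂ = f₂ :=
  fun _ _ _ _ hf => milnor_square_is_pushout_general hj₁ hrange.ge hf
end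

section
/- Let A and B be rings, f : A → B a ring homomorphism, and Φ a multiplicatively closed subset of A (a submonoid containing 1) consisting of central elements of A each of which is a non-zero-divisor in A. Assume that for every s ∈ Φ, the element f(s) is central in B and a non-zero-divisor in B, and that f induces a bijection A/sA → B/f(s)B (that is: for every b ∈ B there exists a ∈ A with b − f(a) ∈ f(s)B, and for every a ∈ A with f(a) ∈ f(s)B one has a ∈ sA). Let λ : A → Φ⁻¹A and φ : B → f(Φ)⁻¹B be the canonical homomorphisms into the Ore localizations of A at Φ and of B at f(Φ), and let ρ : Φ⁻¹A → f(Φ)⁻¹B be the induced homomorphism with ρ(a/s) = f(a)/f(s). Then the sequence of additive abelian groups 0 → A → Φ⁻¹A ⊕ B → f(Φ)⁻¹B → 0 is exact, where the first map is a ↦ (λ(a), f(a)) and the second map is (x, b) ↦ ρ(x) − φ(b). -/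
/-- A submonoid consisting of central elements is a (left) Ore set. -/
def oreSetOfCentral {A : Type*} [Ring A] (Φ : Submonoid A)
    (hc : ∀ s ∈ Φ, ∀ a : A, s * a = a * s) : OreLocalization.OreSet Φ where
  ore_right_cancel r₁ r₂ s h := ⟨s, by rw [hc s s.2 r₁, hc s s.2 r₂, h]⟩
  oreNum r _ := r
  oreDenom _ s := s
  ore_eq r s := hc s s.2 r

/-!
For a left Ore set `S` of left regular elements, the fraction `s⁻¹r` equals the numerator `t`
exactly when `r = s * t`. So `ρ (s⁻¹a) = φ b` means `f a = f s * b`; injectivity of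
`A/sA → B/f(s)B` then gives `a = s * a'`, and cancelling `f s` yields `f a' = b`: this is exactness
in the middle. Surjectivity of `A/sA → B/f(s)B` writes `b = f a + f s * b'`, and dividing by `f s`
gives exactness on the right.
-/

section OreFractions

open OreLocalization

theorem mul_oreDiv_eq_numeratorRingHom {R : Type*} [Semiring R] {S : Submonoid R} [OreSet S]
    (s : S) (t : R) : (s * t : R) /ₒ s = (numeratorRingHom t : OreLocalization S R) :=
  (numerator_isUnit s).mul_left_cancel <| by
    rw [numeratorHom_apply, OreLocalization.mul_cancel]
    exact map_mul (numeratorRingHom : R →+* OreLocalization S R) (s : R) t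

theorem oreDiv_eq_numeratorRingHom_iff {R : Type*} [Ring R] {S : Submonoid R} [OreSet S]
    (hS : S ≤ nonZeroDivisorsLeft R) {r t : R} {s : S} :
    r /ₒ s = (numeratorRingHom t : OreLocalization S R) ↔ r = s * t := by
  refine ⟨fun h ↦ numeratorHom_inj hS ?_, fun h ↦ h ▸ mul_oreDiv_eq_numeratorRingHom s t⟩
  calc (numeratorHom r : OreLocalization S R)
      = numeratorHom (s : R) * (r /ₒ s) := OreLocalization.mul_cancel.symm
    _ = numeratorHom (s : R) * numeratorHom t := congrArg _ h
    _ = numeratorHom (s * t) := (map_mul numeratorHom _ _).symm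

end OreFractions

theorem map_eq_map_mul_iff {F M N : Type*} [Semigroup M] [Semigroup N] [FunLike F M N]
    [MulHomClass F M N] (f : F) {s a : M} {b : N} (hs : IsLeftRegular (f s))
    (hdvd : f s ∣ f a → s ∣ a) : f a = f s * b ↔ ∃ a', a = s * a' ∧ f a' = b := by
  constructor
  · intro h
    obtain ⟨a', rfl⟩ := hdvd ⟨b, h⟩
    exact ⟨a', rfl, hs <| (map_mul f s a').symm.trans h⟩
  · rintro ⟨a', rfl, rfl⟩
    exact map_mul f s a'

section ExactSequence

open OreLocalization

variable {A B : Type*} [Ring A] [Ring B] (f : A →+* B) (Φ : Submonoid A)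
  [OreSet Φ] [OreSet (Φ.map (f : A →* B))]
  (ρ : OreLocalization Φ A →+* OreLocalization (Φ.map (f : A →* B)) B)
  (hρ : ∀ (a : A) (s : Φ), ρ (a /ₒ s) = f a /ₒ (f : A →* B).submonoidMap Φ s)

include hρ

theorem exact_numeratorRingHom_prod_sub (hA : Φ ≤ nonZeroDivisorsLeft A)
    (hB : Φ.map (f : A →* B) ≤ nonZeroDivisorsLeft B)
    (hinj : ∀ s ∈ Φ, ∀ a, f s ∣ f a → s ∣ a) :
    Function.Exact
      (fun a : A ↦ ((numeratorRingHom a : OreLocalization Φ A), f a))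
      (fun p : OreLocalization Φ A × B ↦
        ρ p.1 - (numeratorRingHom p.2 : OreLocalization (Φ.map (f : A →* B)) B)) := by
  rintro ⟨x, b⟩
  induction x using OreLocalization.ind with | _ a s
  have hs : IsLeftRegular (f s) :=
    isLeftRegular_iff_mem_nonZeroDivisorsLeft.2 (hB (Submonoid.mem_map_of_mem (f : A →* B) s.2))
  calc ρ (a /ₒ s) - numeratorRingHom b = 0
      ↔ f a /ₒ (f : A →* B).submonoidMap Φ s = numeratorRingHom b := by rw [sub_eq_zero, hρ]
    _ ↔ f a = f s * b := oreDiv_eq_numeratorRingHom_iff hB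
    _ ↔ ∃ a', a = s * a' ∧ f a' = b := map_eq_map_mul_iff f hs (hinj s s.2 a)
    _ ↔ ∃ a', a /ₒ s = (numeratorRingHom a' : OreLocalization Φ A) ∧ f a' = b := by
      simp only [oreDiv_eq_numeratorRingHom_iff hA]
    _ ↔ (a /ₒ s, b) ∈ Set.range fun a' ↦ ((numeratorRingHom a' : OreLocalization Φ A), f a') := by
      simp only [Set.mem_range, Prod.mk.injEq, eq_comm (a := a /ₒ s)]

theorem surjective_map_sub_numeratorRingHom (hsurj : ∀ s ∈ Φ, ∀ b, ∃ a, f s ∣ b - f a) :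
    Function.Surjective
      (fun p : OreLocalization Φ A × B ↦
        ρ p.1 - (numeratorRingHom p.2 : OreLocalization (Φ.map (f : A →* B)) B)) := by
  intro y
  induction y using OreLocalization.ind with | _ b t
  obtain ⟨s, rfl⟩ := (f : A →* B).submonoidMap_surjective Φ t
  obtain ⟨a, b', hb⟩ := hsurj s s.2 b
  refine ⟨(a /ₒ s, -b'), ?_⟩
  calc ρ (a /ₒ s) - numeratorRingHom (-b')
      = f a /ₒ (f : A →* B).submonoidMap Φ s + numeratorRingHom b' := by
        rw [hρ, map_neg, sub_neg_eq_add]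
    _ = f a /ₒ (f : A →* B).submonoidMap Φ s
          + (f s * b') /ₒ (f : A →* B).submonoidMap Φ s :=
        congrArg _ (mul_oreDiv_eq_numeratorRingHom ((f : A →* B).submonoidMap Φ s) b').symm
    _ = b /ₒ (f : A →* B).submonoidMap Φ s := by rw [add_oreDiv, ← hb, add_sub_cancel]

theorem karoubi_exact_sequence_general (hA : Φ ≤ nonZeroDivisorsLeft A)
    (hB : Φ.map (f : A →* B) ≤ nonZeroDivisorsLeft B)
    (hsurj : ∀ s ∈ Φ, ∀ b, ∃ a, f s ∣ b - f a)
    (hinj : ∀ s ∈ Φ, ∀ a, f s ∣ f a → s ∣ a) :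
    Function.Injective (fun a : A ↦ ((numeratorRingHom a : OreLocalization Φ A), f a)) ∧
      Function.Exact
        (fun a : A ↦ ((numeratorRingHom a : OreLocalization Φ A), f a))
        (fun p : OreLocalization Φ A × B ↦
          ρ p.1 - (numeratorRingHom p.2 : OreLocalization (Φ.map (f : A →* B)) B)) ∧
      Function.Surjective
        (fun p : OreLocalization Φ A × B ↦
          ρ p.1 - (numeratorRingHom p.2 : OreLocalization (Φ.map (f : A →* B)) B)) :=
  ⟨.of_comp (f := Prod.fst) (numeratorHom_inj hA),
    exact_numeratorRingHom_prod_sub f Φ ρ hρ hA hB hinj,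
    surjective_map_sub_numeratorRingHom f Φ ρ hρ hsurj⟩

end ExactSequence

/-- Karoubi's situation: `f : A → B`, `Φ` a multiplicatively closed set of central
non-zero-divisors of `A` whose image consists of central non-zero-divisors of `B`, such that
`f` induces bijections `A/sA → B/f(s)B` for all `s ∈ Φ`.  Then, with `λ : A → Φ⁻¹A`,
`φ : B → f(Φ)⁻¹B` the canonical maps to the Ore localizations and `ρ : Φ⁻¹A → f(Φ)⁻¹B` the
induced map `a/s ↦ f(a)/f(s)`, the sequence of additive groups
`0 → A → Φ⁻¹A ⊕ B → f(Φ)⁻¹B → 0`, with maps `a ↦ (λ a, f a)` and `(x, b) ↦ ρ x − φ b`,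
is exact. -/
theorem karoubi_exact_sequence
    {A B : Type*} [Ring A] [Ring B] (f : A →+* B) (Φ : Submonoid A)
    (hcentA : ∀ s ∈ Φ, ∀ a : A, s * a = a * s)
    (hregA : ∀ s ∈ Φ, (s : A) ∈ nonZeroDivisors A)
    (hcentB : ∀ s ∈ Φ, ∀ b : B, f s * b = b * f s)
    (hregB : ∀ s ∈ Φ, f s ∈ nonZeroDivisors B)
    (hmodsurj : ∀ s ∈ Φ, ∀ b : B, ∃ a : A, ∃ b' : B, b - f a = f s * b')
    (hmodinj : ∀ s ∈ Φ, ∀ a : A, (∃ b : B, f a = f s * b) → ∃ a' : A, a = s * a') :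
    letI : OreLocalization.OreSet Φ := oreSetOfCentral Φ hcentA
    letI : OreLocalization.OreSet (Φ.map (f : A →* B)) :=
      oreSetOfCentral (Φ.map (f : A →* B))
        (by rintro t ⟨s, hs, rfl⟩ b; exact hcentB s hs b)
    ∀ ρ : OreLocalization Φ A →+* OreLocalization (Φ.map (f : A →* B)) B,
      (∀ (a : A) (s : Φ), ρ (a /ₒ s) =
        f a /ₒ (⟨f s, Submonoid.mem_map_of_mem (f : A →* B) s.2⟩ : Φ.map (f : A →* B))) →
      (Function.Injective
          (fun a : A => ((OreLocalization.numeratorRingHom a : OreLocalization Φ A), f a)) ∧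
        Function.Exact
          (fun a : A => ((OreLocalization.numeratorRingHom a : OreLocalization Φ A), f a))
          (fun p : OreLocalization Φ A × B =>
            ρ p.1 - (OreLocalization.numeratorRingHom p.2 :
              OreLocalization (Φ.map (f : A →* B)) B)) ∧
        Function.Surjective
          (fun p : OreLocalization Φ A × B =>
            ρ p.1 - (OreLocalization.numeratorRingHom p.2 :
              OreLocalization (Φ.map (f : A →* B)) B))) := by
  intro ρ hρ
  -- `(_)`, unlike `_`, lets unification with `ρ` supply the Ore structures.
  exact @karoubi_exact_sequence_general _ _ _ _ f Φ (_) (_) ρ hρ (fun s hs ↦ (hregA s hs).1)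
    (Submonoid.map_le_iff_le_comap.2 fun s hs ↦ (hregB s hs).1) hmodsurj hmodinj
end

section
/- Let A and B be rings, f : A → B a ring homomorphism, and Φ a multiplicatively closed subset of A (a submonoid containing 1) consisting of central elements of A each of which is a non-zero-divisor in A. Assume that for every s ∈ Φ, the element f(s) is central in B and a non-zero-divisor in B, and that f induces a bijection A/sA → B/f(s)B. Let λ : A → Φ⁻¹A and φ : B → f(Φ)⁻¹B be the canonical homomorphisms into the Ore localizations, and let ρ : Φ⁻¹A → f(Φ)⁻¹B be the induced homomorphism with ρ(a/s) = f(a)/f(s). Then ρ induces an isomorphism of additive abelian groups (Φ⁻¹A)/λ(A) → (f(Φ)⁻¹B)/φ(B) between the cokernel of λ and the cokernel of φ. -/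
/-!
A fraction `s⁻¹ r` lies in the image of `R` exactly when, for some `u ∈ S`, the numerator `u r` of
the expanded fraction `(u s)⁻¹ (u r)` is a right multiple of its denominator `u s`. Hence
injectivity of `A/sA → B/f(s)B` for all `s ∈ Φ` makes `ρ` reflect membership in the image.
By surjectivity every `b` has the form `f(a) + f(s) b'`, and then `f(s)⁻¹ b` and `ρ(s⁻¹ a)` differ
by `b'`.
-/

section NumeratorRange

open OreLocalization

variable {R : Type*} [Ring R] (S : Submonoid R) [OreSet S]

/-- The image of `R` in its left Ore localization `R[S⁻¹]`, as an additive subgroup. The quotient by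
it is the cokernel of the canonical map `R → R[S⁻¹]`. -/
abbrev numeratorRange : AddSubgroup R[S⁻¹] :=
  (numeratorRingHom : R →+* R[S⁻¹]).toAddMonoidHom.range

variable {S}

theorem mem_numeratorRange {x : R[S⁻¹]} : x ∈ numeratorRange S ↔ ∃ c : R, c /ₒ (1 : S) = x :=
  Iff.rfl

theorem mul_oreDiv_self (s : S) (c : R) : ((s : R) * c) /ₒ s = c /ₒ (1 : S) := by
  rw [← mul_div_one, OreLocalization.div_eq_one, one_mul]

theorem oreDiv_mem_numeratorRange_iff {r : R} {s : S} :
    r /ₒ s ∈ numeratorRange S ↔ ∃ (u : S) (c : R), (u : R) * r = u * s * c := by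
  rw [mem_numeratorRange]
  constructor
  · rintro ⟨c, hc⟩
    obtain ⟨u, v, hnum, hden⟩ := oreDiv_eq_iff.mp hc
    simp only [Submonoid.smul_def, smul_eq_mul, OneMemClass.coe_one, mul_one] at hnum hden
    exact ⟨u, c, by rw [hnum, hden]⟩
  · rintro ⟨u, c, h⟩
    refine ⟨c, ?_⟩
    calc c /ₒ (1 : S) = (((u * s : S) : R) * c) /ₒ (u * s) := (mul_oreDiv_self _ _).symm
      _ = (u • r) /ₒ (u * s) := by rw [Submonoid.coe_mul, ← h, Submonoid.smul_def, smul_eq_mul]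
      _ = r /ₒ s := (OreLocalization.expand' r s u).symm

theorem oreDiv_sub_oreDiv_same (r r' : R) (s : S) : r /ₒ s - r' /ₒ s = (r - r') /ₒ s := by
  rw [sub_eq_add_neg, OreLocalization.neg_def, add_oreDiv, ← sub_eq_add_neg]

end NumeratorRange

section InducedMap

open OreLocalization

variable {A B : Type*} [Ring A] [Ring B] {f : A →+* B} {Φ : Submonoid A} [OreSet Φ]
  [OreSet (Φ.map (f : A →* B))] {ρ : A[Φ⁻¹] →+* B[(Φ.map (f : A →* B))⁻¹]}

theorem map_mem_numeratorRange_iff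
    (hmodinj : ∀ s ∈ Φ, ∀ a : A, (∃ b : B, f a = f s * b) → ∃ a' : A, a = s * a')
    (hρ : ∀ (a : A) (s : Φ), ρ (a /ₒ s) =
      f a /ₒ (⟨f s, Submonoid.mem_map_of_mem (f : A →* B) s.2⟩ : Φ.map (f : A →* B)))
    (x : A[Φ⁻¹]) :
    ρ x ∈ numeratorRange (Φ.map (f : A →* B)) ↔ x ∈ numeratorRange Φ := by
  induction x using OreLocalization.ind with
  | _ a s =>
    rw [hρ, oreDiv_mem_numeratorRange_iff, oreDiv_mem_numeratorRange_iff]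
    constructor
    · rintro ⟨⟨_, w, hw, rfl⟩, b, h⟩
      have hdvd : f (w * a) = f (w * s) * b := by
        simpa only [MonoidHom.coe_coe, map_mul] using h
      exact ⟨⟨w, hw⟩, hmodinj (w * s) (Φ.mul_mem hw s.2) (w * a) ⟨b, hdvd⟩⟩
    · rintro ⟨w, a', h⟩
      refine ⟨⟨f w, Submonoid.mem_map_of_mem (f : A →* B) w.2⟩, f a', ?_⟩
      simpa only [map_mul] using congrArg f h

theorem exists_sub_map_mem_numeratorRange
    (hmodsurj : ∀ s ∈ Φ, ∀ b : B, ∃ a : A, ∃ b' : B, b - f a = f s * b')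
    (hρ : ∀ (a : A) (s : Φ), ρ (a /ₒ s) =
      f a /ₒ (⟨f s, Submonoid.mem_map_of_mem (f : A →* B) s.2⟩ : Φ.map (f : A →* B)))
    (y : B[(Φ.map (f : A →* B))⁻¹]) :
    ∃ x : A[Φ⁻¹], y - ρ x ∈ numeratorRange (Φ.map (f : A →* B)) := by
  induction y using OreLocalization.ind with
  | _ b t =>
    obtain ⟨_, s, hs, rfl⟩ := t
    obtain ⟨a, b', h⟩ := hmodsurj s hs b
    let t : Φ.map (f : A →* B) := ⟨f s, Submonoid.mem_map_of_mem (f : A →* B) hs⟩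
    refine ⟨a /ₒ ⟨s, hs⟩, mem_numeratorRange.mpr ⟨b', ?_⟩⟩
    calc b' /ₒ 1 = (f s * b') /ₒ t := (mul_oreDiv_self t b').symm
      _ = (b - f a) /ₒ t := by rw [h]
      _ = b /ₒ t - f a /ₒ t := (oreDiv_sub_oreDiv_same b (f a) t).symm
      _ = b /ₒ t - ρ (a /ₒ ⟨s, hs⟩) := by rw [hρ]

theorem karoubi_cokernel_iso_general
    (hmodsurj : ∀ s ∈ Φ, ∀ b : B, ∃ a : A, ∃ b' : B, b - f a = f s * b')
    (hmodinj : ∀ s ∈ Φ, ∀ a : A, (∃ b : B, f a = f s * b) → ∃ a' : A, a = s * a')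
    (hρ : ∀ (a : A) (s : Φ), ρ (a /ₒ s) =
      f a /ₒ (⟨f s, Submonoid.mem_map_of_mem (f : A →* B) s.2⟩ : Φ.map (f : A →* B))) :
    ∃ e : (A[Φ⁻¹] ⧸ numeratorRange Φ) ≃+
        (B[(Φ.map (f : A →* B))⁻¹] ⧸ numeratorRange (Φ.map (f : A →* B))),
      ∀ x : A[Φ⁻¹], e (QuotientAddGroup.mk x) = QuotientAddGroup.mk (ρ x) := by
  let π := QuotientAddGroup.mk' (numeratorRange (Φ.map (f : A →* B)))
  let ψ := π.comp ρ.toAddMonoidHom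
  have hker : numeratorRange Φ = ψ.ker := by
    ext x
    exact (map_mem_numeratorRange_iff hmodinj hρ x).symm.trans
      (QuotientAddGroup.eq_zero_iff (ρ x)).symm
  have hsurj : Function.Surjective ψ := by
    intro q
    obtain ⟨y, rfl⟩ := QuotientAddGroup.mk'_surjective _ q
    obtain ⟨x, hx⟩ := exists_sub_map_mem_numeratorRange hmodsurj hρ y
    exact ⟨x, (QuotientAddGroup.eq_iff_sub_mem.mpr hx).symm⟩
  exact ⟨QuotientAddGroup.liftEquiv _ hsurj hker, QuotientAddGroup.liftEquiv_mk _ hsurj hker⟩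

end InducedMap

/-- In Karoubi's situation, the induced map `ρ : Φ⁻¹A → f(Φ)⁻¹B`, `a/s ↦ f(a)/f(s)`,
induces an isomorphism of additive groups `(Φ⁻¹A)/λ(A) ≅ (f(Φ)⁻¹B)/φ(B)` between the
cokernels of the canonical maps `λ : A → Φ⁻¹A` and `φ : B → f(Φ)⁻¹B`. -/
theorem karoubi_cokernel_iso
    {A B : Type*} [Ring A] [Ring B] (f : A →+* B) (Φ : Submonoid A)
    (hcentA : ∀ s ∈ Φ, ∀ a : A, s * a = a * s)
    (hregA : ∀ s ∈ Φ, (s : A) ∈ nonZeroDivisors A)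
    (hcentB : ∀ s ∈ Φ, ∀ b : B, f s * b = b * f s)
    (hregB : ∀ s ∈ Φ, f s ∈ nonZeroDivisors B)
    (hmodsurj : ∀ s ∈ Φ, ∀ b : B, ∃ a : A, ∃ b' : B, b - f a = f s * b')
    (hmodinj : ∀ s ∈ Φ, ∀ a : A, (∃ b : B, f a = f s * b) → ∃ a' : A, a = s * a') :
    letI : OreLocalization.OreSet Φ := oreSetOfCentral Φ hcentA
    letI : OreLocalization.OreSet (Φ.map (f : A →* B)) :=
      oreSetOfCentral (Φ.map (f : A →* B))
        (by rintro t ⟨s, hs, rfl⟩ b; exact hcentB s hs b)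
    ∀ ρ : OreLocalization Φ A →+* OreLocalization (Φ.map (f : A →* B)) B,
      (∀ (a : A) (s : Φ), ρ (a /ₒ s) =
        f a /ₒ (⟨f s, Submonoid.mem_map_of_mem (f : A →* B) s.2⟩ : Φ.map (f : A →* B))) →
      ∃ e : (OreLocalization Φ A ⧸
              (OreLocalization.numeratorRingHom : A →+* OreLocalization Φ A).toAddMonoidHom.range)
            ≃+
            (OreLocalization (Φ.map (f : A →* B)) B ⧸
              (OreLocalization.numeratorRingHom :
                B →+* OreLocalization (Φ.map (f : A →* B)) B).toAddMonoidHom.range),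
        ∀ x : OreLocalization Φ A,
          e (QuotientAddGroup.mk x) = QuotientAddGroup.mk (ρ x) := by
  let : OreLocalization.OreSet Φ := oreSetOfCentral Φ hcentA
  let : OreLocalization.OreSet (Φ.map (f : A →* B)) :=
    oreSetOfCentral (Φ.map (f : A →* B)) (by rintro t ⟨s, hs, rfl⟩ b; exact hcentB s hs b)
  exact fun _ => karoubi_cokernel_iso_general hmodsurj hmodinj
end

section
/- Let R be a ring and H, G groups, with identity elements e_H and e_G. Let F be the free left R-module on the set H × G (formal finite sums Σ r_{(h,g)} (h,g) with r_{(h,g)} ∈ R), equipped with the multiplication determined by biadditivity and the rules (r (h,g)) · (r' (h',g')) = r r' ((h, g g') + (h h', g') − (h, g')) for r, r' ∈ R, h, h' ∈ H, g, g' ∈ G. Then this multiplication is associative and (e_H, e_G) is a two-sided multiplicative identity, so F is a ring; moreover, the map R → F, r ↦ r (e_H, e_G), is an injective ring homomorphism and r (h,g) = (h,g) r holds in F for all r ∈ R, h ∈ H, g ∈ G. -/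
/-!
In `RH ⊠_R RG` every `(g - 1)(h' - 1)` with `g ∈ G`, `h' ∈ H` vanishes; substituting
`g h' = g + h' - 1` into `h g h' g'` gives the product of `(h,g)` and `(h',g')`. In terms of the
group ring `R(H × G)` and its idempotent endomorphisms `l : (h,g) ↦ (h,1)` and
`r : (h,g) ↦ (1,g)`, the new product is `x * y - (x - l x) * (y - r y)`. Both `l` and `r` stay
multiplicative for it, which forces associativity, and it agrees with the group ring product as
soon as `l x = x` or `r y = y`, in particular when one factor is a scalar.
-/

/-- The multiplication of the noncommutative tensor product `RH ⊠_R RG`: on the free left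
`R`-module on `H × G` it is determined by biadditivity and the rule
`(r (h,g)) · (r' (h',g')) = r r' ((h, g g') + (h h', g') − (h, g'))`. -/
noncomputable def ncMul {R : Type*} [Ring R] {H G : Type*} [Group H] [Group G]
    (x y : (H × G) →₀ R) : (H × G) →₀ R :=
  x.sum fun p r => y.sum fun q s =>
    (r * s) • (Finsupp.single (p.1, p.2 * q.2) (1 : R)
      + Finsupp.single (p.1 * q.1, q.2) (1 : R) - Finsupp.single (p.1, q.2) (1 : R))

open scoped MonoidAlgebra
open MonoidAlgebra (ofCoeff ofCoeff_injective mapDomainNonUnitalRingHom)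

section TwistedMul

variable {A : Type*} [NonUnitalRing A] (l r : A →ₙ+* A)

/-- The product of a ring `A` deformed by two endomorphisms `l` and `r` so that the products
`(x - l x) * (y - r y)` are removed. It is bundled as a biadditive map. -/
def twistedMul : A →+ A →+ A :=
  AddMonoidHom.mul -
    (AddMonoidHom.mul.comp (AddMonoidHom.id A - (l : A →+ A))).compl₂
      (AddMonoidHom.id A - (r : A →+ A))

theorem twistedMul_apply (x y : A) :
    twistedMul l r x y = x * y - (x - l x) * (y - r y) :=
  rfl

variable {l r}

theorem twistedMul_eq_mul_of_left_fixed {x : A} (hx : l x = x) (y : A) :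
    twistedMul l r x y = x * y := by
  rw [twistedMul_apply, hx, sub_self, zero_mul, sub_zero]

theorem twistedMul_eq_mul_of_right_fixed (x : A) {y : A} (hy : r y = y) :
    twistedMul l r x y = x * y := by
  rw [twistedMul_apply, hy, sub_self, mul_zero, sub_zero]

theorem map_twistedMul_of_left_idempotent (hl : ∀ x, l (l x) = l x) (x y : A) :
    l (twistedMul l r x y) = l x * l y := by
  rw [twistedMul_apply, map_sub, map_mul, map_mul, map_sub, hl, sub_self, zero_mul, sub_zero]

theorem map_twistedMul_of_right_idempotent (hr : ∀ x, r (r x) = r x) (x y : A) :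
    r (twistedMul l r x y) = r x * r y := by
  rw [twistedMul_apply, map_sub, map_mul, map_mul, map_sub r y, hr, sub_self, mul_zero, sub_zero]

theorem twistedMul_assoc (hl : ∀ x, l (l x) = l x) (hr : ∀ x, r (r x) = r x) (x y z : A) :
    twistedMul l r (twistedMul l r x y) z = twistedMul l r x (twistedMul l r y z) := by
  rw [twistedMul_apply l r (twistedMul l r x y), twistedMul_apply l r x (twistedMul l r y z),
    map_twistedMul_of_left_idempotent hl, map_twistedMul_of_right_idempotent hr,
    twistedMul_apply, twistedMul_apply]
  noncomm_ring

end TwistedMul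

section MonoidNcMul

variable {R H G : Type*} [Ring R]

/-- The product of `ncMul`, for multiplications on `H` and `G` that need not be those of groups. -/
noncomputable def monoidNcMul [Mul H] [Mul G] (x y : (H × G) →₀ R) : (H × G) →₀ R :=
  x.sum fun p r => y.sum fun q s =>
    (r * s) • (Finsupp.single (p.1, p.2 * q.2) (1 : R)
      + Finsupp.single (p.1 * q.1, q.2) (1 : R) - Finsupp.single (p.1, q.2) (1 : R))

variable [Monoid H] [Monoid G]

variable (R H G) in
/-- The endomorphism `(h, g) ↦ (h, 1)` of `R[H × G]`, which retracts it onto `R[H]`. -/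
noncomputable def retractLeft : R[H × G] →ₙ+* R[H × G] :=
  mapDomainNonUnitalRingHom R ((MonoidHom.inl H G).comp (MonoidHom.fst H G) : _ →ₙ* _)

variable (R H G) in
/-- The endomorphism `(h, g) ↦ (1, g)` of `R[H × G]`, which retracts it onto `R[G]`. -/
noncomputable def retractRight : R[H × G] →ₙ+* R[H × G] :=
  mapDomainNonUnitalRingHom R ((MonoidHom.inr H G).comp (MonoidHom.snd H G) : _ →ₙ* _)

theorem retractLeft_single (p : H × G) (a : R) :
    retractLeft R H G (.single p a) = .single (p.1, 1) a :=
  MonoidAlgebra.mapDomain_single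

theorem retractRight_single (p : H × G) (a : R) :
    retractRight R H G (.single p a) = .single (1, p.2) a :=
  MonoidAlgebra.mapDomain_single

theorem retractLeft_idempotent (x : R[H × G]) :
    retractLeft R H G (retractLeft R H G x) = retractLeft R H G x := by
  induction x using MonoidAlgebra.induction_linear with
  | zero => simp only [map_zero]
  | add x y hx hy => simp only [map_add, hx, hy]
  | single p a => simp only [retractLeft_single]

theorem retractRight_idempotent (x : R[H × G]) :
    retractRight R H G (retractRight R H G x) = retractRight R H G x := by
  induction x using MonoidAlgebra.induction_linear with
  | zero => simp only [map_zero]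
  | add x y hx hy => simp only [map_add, hx, hy]
  | single p a => simp only [retractRight_single]

variable (R H G) in
/-- The product of `RH ⊠_R RG`, as a biadditive map on the monoid ring `R[H × G]`. -/
noncomputable def ncTensorMul : R[H × G] →+ R[H × G] →+ R[H × G] :=
  twistedMul (retractLeft R H G) (retractRight R H G)

theorem ncTensorMul_single_single (p q : H × G) (a b : R) :
    ncTensorMul R H G (.single p a) (.single q b) =
      .single (p.1, p.2 * q.2) (a * b) + .single (p.1 * q.1, q.2) (a * b)
        - .single (p.1, q.2) (a * b) := by
  obtain ⟨h, g⟩ := p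
  obtain ⟨h', g'⟩ := q
  simp only [ncTensorMul, twistedMul_apply, retractLeft_single,
    retractRight_single, sub_mul, mul_sub, MonoidAlgebra.single_mul_single, Prod.mk_mul_mk,
    mul_one, one_mul]
  abel

theorem ofCoeff_monoidNcMul (x y : (H × G) →₀ R) :
    ofCoeff (monoidNcMul x y) = ncTensorMul R H G (ofCoeff x) (ofCoeff y) := by
  conv_rhs => rw [← (ofCoeff x).sum_coeff_single, ← (ofCoeff y).sum_coeff_single]
  rw [map_finsuppSum (ncTensorMul R H G), AddMonoidHom.finsuppSum_apply]
  simp only [monoidNcMul, MonoidAlgebra.ofCoeff_finsuppSum, map_finsuppSum,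
    ncTensorMul_single_single, smul_sub, smul_add,
    Finsupp.smul_single, smul_eq_mul, mul_one, MonoidAlgebra.ofCoeff_sub,
    MonoidAlgebra.ofCoeff_add, MonoidAlgebra.ofCoeff_single]

theorem ncTensorMul_assoc (x y z : R[H × G]) :
    ncTensorMul R H G (ncTensorMul R H G x y) z = ncTensorMul R H G x (ncTensorMul R H G y z) :=
  twistedMul_assoc retractLeft_idempotent retractRight_idempotent x y z

theorem single_one_ncTensorMul (a : R) (x : R[H × G]) :
    ncTensorMul R H G (.single (1, 1) a) x = .single (1, 1) a * x :=
  twistedMul_eq_mul_of_left_fixed (retractLeft_single 1 a) x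

theorem ncTensorMul_single_one (x : R[H × G]) (a : R) :
    ncTensorMul R H G x (.single (1, 1) a) = x * .single (1, 1) a :=
  twistedMul_eq_mul_of_right_fixed x (retractRight_single 1 a)

end MonoidNcMul

theorem ncTensor_is_ring_general (R : Type*) [Ring R] (H G : Type*) [Monoid H] [Monoid G] :
    (∀ x y z : (H × G) →₀ R, monoidNcMul (monoidNcMul x y) z = monoidNcMul x (monoidNcMul y z)) ∧
    (∀ x y z : (H × G) →₀ R, monoidNcMul x (y + z) = monoidNcMul x y + monoidNcMul x z) ∧
    (∀ x y z : (H × G) →₀ R, monoidNcMul (x + y) z = monoidNcMul x z + monoidNcMul y z) ∧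
    (∀ x : (H × G) →₀ R,
      monoidNcMul (Finsupp.single ((1 : H), (1 : G)) (1 : R)) x = x ∧
      monoidNcMul x (Finsupp.single ((1 : H), (1 : G)) (1 : R)) = x) ∧
    (Function.Injective (fun r : R => Finsupp.single ((1 : H), (1 : G)) r)) ∧
    (∀ r r' : R, (Finsupp.single ((1 : H), (1 : G)) (r + r') : (H × G) →₀ R) =
      Finsupp.single ((1 : H), (1 : G)) r + Finsupp.single ((1 : H), (1 : G)) r') ∧
    (∀ r r' : R, (Finsupp.single ((1 : H), (1 : G)) (r * r') : (H × G) →₀ R) =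
      monoidNcMul (Finsupp.single ((1 : H), (1 : G)) r) (Finsupp.single ((1 : H), (1 : G)) r')) ∧
    (∀ (r : R) (h : H) (g : G),
      monoidNcMul (Finsupp.single ((1 : H), (1 : G)) r) (Finsupp.single (h, g) (1 : R)) =
      monoidNcMul (Finsupp.single (h, g) (1 : R)) (Finsupp.single ((1 : H), (1 : G)) r)) := by
  refine ⟨fun x y z => ofCoeff_injective ?_, fun x y z => ofCoeff_injective ?_,
    fun x y z => ofCoeff_injective ?_,
    fun x => ⟨ofCoeff_injective ?_, ofCoeff_injective ?_⟩, Finsupp.single_injective _,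
    Finsupp.single_add _, fun a b => ofCoeff_injective ?_, fun a h g => ofCoeff_injective ?_⟩
  · simp only [ofCoeff_monoidNcMul, ncTensorMul_assoc]
  · simp only [ofCoeff_monoidNcMul, MonoidAlgebra.ofCoeff_add, map_add]
  · simp only [ofCoeff_monoidNcMul, MonoidAlgebra.ofCoeff_add, map_add, AddMonoidHom.add_apply]
  · rw [ofCoeff_monoidNcMul]
    exact (single_one_ncTensorMul 1 _).trans (one_mul _)
  · rw [ofCoeff_monoidNcMul]
    exact (ncTensorMul_single_one _ 1).trans (mul_one _)
  · simp only [ofCoeff_monoidNcMul, MonoidAlgebra.ofCoeff_single, single_one_ncTensorMul,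
      MonoidAlgebra.single_mul_single, Prod.mk_mul_mk, mul_one]
  · simp only [ofCoeff_monoidNcMul, MonoidAlgebra.ofCoeff_single, single_one_ncTensorMul,
      ncTensorMul_single_one, MonoidAlgebra.single_mul_single, Prod.mk_mul_mk, mul_one, one_mul]

/-- The free left `R`-module `F` on `H × G`, equipped with the multiplication `ncMul`, is an
associative unital ring with identity `(e_H, e_G)`; the map `R → F`, `r ↦ r (e_H, e_G)`, is an
injective ring homomorphism, and `r (h,g) = (h,g) r` holds in `F`. -/
theorem ncTensor_is_ring (R : Type*) [Ring R] (H G : Type*) [Group H] [Group G] :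
    (∀ x y z : (H × G) →₀ R, ncMul (ncMul x y) z = ncMul x (ncMul y z)) ∧
    (∀ x y z : (H × G) →₀ R, ncMul x (y + z) = ncMul x y + ncMul x z) ∧
    (∀ x y z : (H × G) →₀ R, ncMul (x + y) z = ncMul x z + ncMul y z) ∧
    (∀ x : (H × G) →₀ R,
      ncMul (Finsupp.single ((1 : H), (1 : G)) (1 : R)) x = x ∧
      ncMul x (Finsupp.single ((1 : H), (1 : G)) (1 : R)) = x) ∧
    (Function.Injective (fun r : R => Finsupp.single ((1 : H), (1 : G)) r)) ∧
    (∀ r r' : R, (Finsupp.single ((1 : H), (1 : G)) (r + r') : (H × G) →₀ R) =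
      Finsupp.single ((1 : H), (1 : G)) r + Finsupp.single ((1 : H), (1 : G)) r') ∧
    (∀ r r' : R, (Finsupp.single ((1 : H), (1 : G)) (r * r') : (H × G) →₀ R) =
      ncMul (Finsupp.single ((1 : H), (1 : G)) r) (Finsupp.single ((1 : H), (1 : G)) r')) ∧
    (∀ (r : R) (h : H) (g : G),
      ncMul (Finsupp.single ((1 : H), (1 : G)) r) (Finsupp.single (h, g) (1 : R)) =
      ncMul (Finsupp.single (h, g) (1 : R)) (Finsupp.single ((1 : H), (1 : G)) r)) :=
  ncTensor_is_ring_general R H G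
end

section
/- Let R ⊆ S be an extension of rings (R is a subring of S containing the identity of S). Regard S as a left R-module by multiplication, let Q := S/R be the quotient left R-module of S by the R-submodule R·1 = R, and let π : S → Q be the canonical projection. Let S' := End_R(Q) be the ring of left R-linear endomorphisms of Q, and for r ∈ R let ρ_r ∈ S' be the endomorphism induced by right multiplication by r (well defined since Rr ⊆ R). Then the sequence of additive abelian groups 0 → R → S ⊕ S' → Hom_R(S, Q) → 0 is exact, where the first map is r ↦ (r, ρ_r) and the second map sends (s, f) to the left R-linear map x ↦ π(xs) − f(π(x)). -/
/-- Right multiplication by `s : S` as a homomorphism of left `R`-modules, for a subring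
`R` of `S`. -/
def rmulLin {S : Type*} [Ring S] (R : Subring S) (s : S) : S →ₗ[R] S where
  toFun x := x * s
  map_add' x y := add_mul x y s
  map_smul' r x := by
    simp only [RingHom.id_apply, Subring.smul_def, smul_eq_mul, mul_assoc]

/-- The endomorphism of `Q = S/R` induced by right multiplication by `r ∈ R`. -/
def rhoEnd {S : Type*} [Ring S] (R : Subring S) (r : R) :
    Module.End R (S ⧸ Submodule.span R {(1 : S)}) :=
  Submodule.mapQ _ _ (rmulLin R (r : S)) (by
    rw [Submodule.span_le]
    intro x hx
    rw [Set.mem_singleton_iff] at hx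
    subst hx
    simp only [SetLike.mem_coe, Submodule.mem_comap]
    show (1 : S) * (r : S) ∈ Submodule.span R {(1 : S)}
    rw [one_mul]
    have : r • (1 : S) = (r : S) := by simp [Subring.smul_def]
    rw [← this]
    exact Submodule.smul_mem _ r (Submodule.mem_span_singleton_self 1))

/-!
Both `S → Hom_R(S, Q)` and `S' → Hom_R(S, Q)` are compared with `Q` through evaluation at `1`.
The first followed by evaluation is `π`, which is surjective with kernel `R`; the second is
injective with image the kernel of evaluation. So the square formed by `R`, `S`, `S'` and
`Hom_R(S, Q)` is a morphism of exact rows `R → S → Q` and `S' → Hom_R(S, Q) → Q` that is the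
identity on `Q`, whence it is both a pullback and a pushout.
-/

section Square

variable {K A B C D : Type*} [AddGroup C] {φ : A → C} {β : B → C}

theorem exact_prodMk_sub_of_exact_comp [Zero D] {ι : K → A} {ρ : K → B} {ε : C → D}
    (hφ : Function.Exact ι (ε ∘ φ)) (hβ : Function.Injective β) (hεβ : ∀ b, ε (β b) = 0)
    (hsquare : ∀ k, φ (ι k) = β (ρ k)) :
    Function.Exact (fun k => (ι k, ρ k)) (fun ab : A × B => φ ab.1 - β ab.2) := by
  rintro ⟨a, b⟩
  constructor
  · intro hab
    have hφβ : φ a = β b := sub_eq_zero.mp hab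
    have hεφ : ε (φ a) = 0 := by rw [hφβ, hεβ]
    obtain ⟨k, rfl⟩ := (hφ a).mp hεφ
    exact ⟨k, Prod.ext rfl (hβ ((hsquare k).symm.trans hφβ))⟩
  · rintro ⟨k, hk⟩
    obtain ⟨rfl, rfl⟩ := Prod.mk.inj hk
    exact sub_eq_zero.mpr (hsquare k)

theorem surjective_sub_of_surjective_comp [AddGroup D] {ε : C →+ D}
    (hφ : Function.Surjective (ε ∘ φ)) (hβε : Function.Exact β ε) :
    Function.Surjective (fun ab : A × B => φ ab.1 - β ab.2) := by
  intro c
  obtain ⟨a, ha⟩ := hφ (ε c)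
  have hker : ε (-c + φ a) = 0 := by
    rw [map_add, map_neg, ← ha, Function.comp_apply, neg_add_cancel]
  obtain ⟨b, hb⟩ := (hβε _).mp hker
  exact ⟨(a, b), by simp only [hb, neg_add_rev, neg_neg, sub_eq_add_neg, add_neg_cancel_left]⟩

end Square

theorem exact_comp_mkQ_span_singleton_eval {R M N : Type*} [Ring R] [AddCommGroup M]
    [Module R M] [AddCommGroup N] [Module R N] (x : M) :
    Function.Exact (fun f : (M ⧸ Submodule.span R {x}) →ₗ[R] N => f.comp (Submodule.mkQ _))
      (fun g : M →ₗ[R] N => g x) := by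
  intro g
  constructor
  · intro hg
    exact ⟨Submodule.liftQSpanSingleton x g hg, Submodule.liftQ_mkQ _ _ _⟩
  · rintro ⟨f, rfl⟩
    have hx : (Submodule.span R {x}).mkQ x = 0 :=
      (Submodule.Quotient.mk_eq_zero _).mpr (Submodule.mem_span_singleton_self x)
    exact (congrArg f hx).trans (map_zero f)

section RingExtension

variable {S : Type*} [Ring S] (R : Subring S)

theorem mem_span_subring_one_iff {s : S} : s ∈ Submodule.span R {(1 : S)} ↔ s ∈ R := by
  simp only [Submodule.mem_span_singleton, Subring.smul_def, smul_eq_mul, mul_one,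
    Subtype.exists, exists_prop, exists_eq_right]

theorem exact_subring_val_mkQ_span_one :
    Function.Exact ((↑) : R → S) (Submodule.span R {(1 : S)}).mkQ := by
  intro s
  rw [Submodule.mkQ_apply, Submodule.Quotient.mk_eq_zero, mem_span_subring_one_iff,
    Subtype.range_coe, SetLike.mem_coe]

theorem rmulLin_apply_one (s : S) : rmulLin R s 1 = s :=
  one_mul s

theorem rhoEnd_comp_mkQ (r : R) :
    (rhoEnd R r).comp (Submodule.mkQ _) = (Submodule.mkQ _).comp (rmulLin R (r : S)) :=
  Submodule.mapQ_mkQ _ _ _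

end RingExtension

/-- For an extension of rings `R ⊆ S`, with `Q := S/R`, `π : S → Q` the projection and
`S' := End_R(Q)`, the sequence of additive groups `0 → R → S ⊕ S' → Hom_R(S, Q) → 0` is
exact, where the first map is `r ↦ (r, ρ_r)` (with `ρ_r` induced by right multiplication
by `r`), and the second map sends `(s, f)` to `x ↦ π(xs) − f(π(x))`. -/
theorem ring_extension_exact_context {S : Type*} [Ring S] (R : Subring S) :
    Function.Injective
      (fun r : R => ((r : S), rhoEnd R r)) ∧
    Function.Exact
      (fun r : R => ((r : S), rhoEnd R r))
      (fun sf : S × Module.End R (S ⧸ Submodule.span R {(1 : S)}) =>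
        (Submodule.span R {(1 : S)}).mkQ.comp (rmulLin R sf.1)
          - sf.2.comp (Submodule.span R {(1 : S)}).mkQ) ∧
    Function.Surjective
      (fun sf : S × Module.End R (S ⧸ Submodule.span R {(1 : S)}) =>
        (Submodule.span R {(1 : S)}).mkQ.comp (rmulLin R sf.1)
          - sf.2.comp (Submodule.span R {(1 : S)}).mkQ) := by
  set π := (Submodule.span R {(1 : S)}).mkQ
  let evalOne : (S →ₗ[R] S ⧸ Submodule.span R {(1 : S)}) →+ S ⧸ Submodule.span R {(1 : S)} :=
    LinearMap.evalAddMonoidHom 1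
  have eval_rmul : evalOne ∘ (fun s => π.comp (rmulLin R s)) = π :=
    funext fun s => congrArg π (rmulLin_apply_one R s)
  have hfactor : Function.Exact (fun f : Module.End R _ => f.comp π) evalOne :=
    exact_comp_mkQ_span_singleton_eval 1
  refine ⟨fun _ _ h => Subtype.ext (congrArg Prod.fst h), ?_, ?_⟩
  · have hker : Function.Exact ((↑) : R → S) (evalOne ∘ fun s => π.comp (rmulLin R s)) :=
      eval_rmul ▸ exact_subring_val_mkQ_span_one R
    exact exact_prodMk_sub_of_exact_comp hker (fun _ _ h => Submodule.linearMap_qext _ h)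
      hfactor.apply_apply_eq_zero fun r => (rhoEnd_comp_mkQ R r).symm
  · have hsurj : Function.Surjective (evalOne ∘ fun s => π.comp (rmulLin R s)) :=
      eval_rmul ▸ Submodule.mkQ_surjective _
    exact surjective_sub_of_surjective_comp hsurj hfactor
end

section
/- Let R, C, D be rings, α : R → C and β : R → D injective unital ring homomorphisms, X a two-sided ideal of C and Y a two-sided ideal of D such that additively C = α(R) ⊕ X and D = β(R) ⊕ Y (i.e. α(R) ∩ X = 0 and α(R) + X = C, and similarly for D). Let r_C : C → R and r_D : D → R be the additive maps determined by c − α(r_C(c)) ∈ X and d − β(r_D(d)) ∈ Y. On the product additive group M := C × Y define a multiplication by (c₁, y₁)(c₂, y₂) := (c₁c₂, β(r_C(c₁))·y₂ + y₁·β(r_C(c₂)) + y₁y₂). Then this multiplication is associative and biadditive with two-sided identity (1, 0), so M is a ring; moreover, the maps C → M, c ↦ (c, 0), and D → M, d ↦ (α(r_D(d)), d − β(r_D(d))), are injective ring homomorphisms. -/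
/-- The multiplication of the ring `M = C × Y` built from two strictly pure extensions
`α : R → C` (with ideal complement `X`) and `β : R → D` (with ideal complement `Y`):
`(c₁, y₁)(c₂, y₂) := (c₁c₂, β(r_C(c₁))·y₂ + y₁·β(r_C(c₂)) + y₁y₂)`. -/
def pureMul {R C D : Type*} [Ring R] [Ring C] [Ring D] (β : R →+* D)
    (rC : C → R) (Y : TwoSidedIdeal D) (p q : C × Y) : C × Y :=
  (p.1 * q.1,
    ⟨β (rC p.1) * (q.2 : D) + (p.2 : D) * β (rC q.1) + (p.2 : D) * (q.2 : D),
      Y.add_mem (Y.add_mem (Y.mul_mem_left _ _ q.2.2) (Y.mul_mem_right _ _ p.2.2))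
        (Y.mul_mem_right _ _ p.2.2)⟩)

/-!
Since `X` meets `α(R)` trivially, the composite `R → C → C/X` is injective, and `r_C` is a lift of
the projection `C → C/X` through it; hence `r_C` is a ring homomorphism, and likewise `r_D`.
The additive map `(c, y) ↦ (c, β(r_C c) + y)` from `M` to the product ring `C × D` is injective
and takes the multiplication of `M` to that of `C × D`, so `M` inherits the ring axioms: it is the
fibre product of `C` and `D` over `R` in sheared coordinates. There the inclusions of `C` and `D`
read `c ↦ (c, β(r_C c))` and `d ↦ (α(r_D d), d)`.
-/

section Lift

variable {A B S : Type*} [NonAssocSemiring A] [NonAssocSemiring B] [NonAssocSemiring S]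

/-- A set-theoretic lift `r` of a ring homomorphism `f` through an injective ring homomorphism
`g`, as a ring homomorphism. -/
def ringHomOfInjective (g : B →+* S) (hg : Function.Injective g) (f : A →+* S) (r : A → B)
    (h : ∀ a, g (r a) = f a) : A →+* B where
  toFun := r
  map_zero' := hg (by simp only [h, map_zero])
  map_one' := hg (by simp only [h, map_one])
  map_add' a b := hg (by simp only [h, map_add])
  map_mul' a b := hg (by simp only [h, map_mul])

theorem apply_ringHomOfInjective (g : B →+* S) (hg : Function.Injective g) (f : A →+* S)
    (r : A → B) (h : ∀ a, g (r a) = f a) (a : A) : g (ringHomOfInjective g hg f r h a) = f a :=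
  h a

end Lift

section Retraction

variable {R C : Type*} [NonAssocRing R] [NonAssocRing C]

theorem ringCon_mk'_comp_injective (α : R →+* C) (hα : Function.Injective α)
    (X : TwoSidedIdeal C) (hdisj : ∀ r : R, α r ∈ X → α r = 0) :
    Function.Injective (X.ringCon.mk'.comp α) := by
  refine (injective_iff_map_eq_zero _).mpr fun r hr => ?_
  have h_mem : α r ∈ X := X.mem_iff _ |>.mpr (X.ringCon.eq.mp hr)
  exact (map_eq_zero_iff α hα).mp (hdisj r h_mem)

variable (α : R →+* C) (hα : Function.Injective α) (X : TwoSidedIdeal C)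
  (hdisj : ∀ r : R, α r ∈ X → α r = 0) (rC : C → R) (hrC : ∀ c, c - α (rC c) ∈ X)

/-- The retraction of a strictly pure extension `α` along an ideal complement `X`, given as a
function `rC`, as a ring homomorphism. -/
def retraction : C →+* R :=
  ringHomOfInjective (X.ringCon.mk'.comp α) (ringCon_mk'_comp_injective α hα X hdisj)
    X.ringCon.mk' rC fun c => (X.ringCon.eq.mpr (X.rel_iff _ _ |>.mpr (hrC c))).symm

theorem leftInverse_retraction :
    Function.LeftInverse (retraction α hα X hdisj rC hrC) α :=
  fun _ => ringCon_mk'_comp_injective α hα X hdisj (apply_ringHomOfInjective ..)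

end Retraction

section Product

variable {R C D : Type*} [Ring R] [Ring C] [Ring D]

/-- The ring `M`: the additive group `C × Y`, with multiplication `pureMul`. The type remembers
`β` and `rC`, on which the multiplication depends. -/
def StrictlyPureProduct (_β : R →+* D) (_rC : C →+* R) (Y : TwoSidedIdeal D) : Type _ := C × Y

namespace StrictlyPureProduct

variable (β : R →+* D) (rC : C →+* R) (Y : TwoSidedIdeal D)

instance : AddCommGroup (StrictlyPureProduct β rC Y) := inferInstanceAs (AddCommGroup (C × Y))

instance : Mul (StrictlyPureProduct β rC Y) := ⟨pureMul β rC Y⟩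

instance : One (StrictlyPureProduct β rC Y) := ⟨((1 : C), (0 : Y))⟩

/-- The additive embedding of `M` in `C × D` whose image, when `D = β(R) ⊕ Y`, is the fibre
product of `C` and `D` over `R`. It carries `pureMul` to the componentwise multiplication. -/
def shear : StrictlyPureProduct β rC Y →+ C × D where
  toFun p := (p.1, β (rC p.1) + p.2)
  map_zero' := Prod.ext rfl (by
    change β (rC 0) + 0 = 0
    simp only [map_zero, add_zero])
  map_add' p q := Prod.ext rfl (by
    change β (rC (p.1 + q.1)) + ((p.2 : D) + q.2) = β (rC p.1) + p.2 + (β (rC q.1) + q.2)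
    rw [map_add, map_add, add_add_add_comm])

theorem shear_injective : Function.Injective (shear β rC Y) := by
  rintro ⟨a, x⟩ ⟨b, y⟩ h
  obtain ⟨rfl, hxy⟩ := Prod.ext_iff.mp h
  exact Prod.ext rfl (Subtype.ext (add_left_cancel hxy))

theorem shear_one : shear β rC Y 1 = 1 := by
  refine Prod.ext rfl ?_
  change β (rC 1) + 0 = 1
  rw [map_one, map_one, add_zero]

theorem shear_mul (p q : StrictlyPureProduct β rC Y) :
    shear β rC Y (p * q) = shear β rC Y p * shear β rC Y q := by
  refine Prod.ext rfl ?_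
  change β (rC (p.1 * q.1)) + (β (rC p.1) * q.2 + p.2 * β (rC q.1) + p.2 * q.2) =
    (β (rC p.1) + p.2) * (β (rC q.1) + q.2)
  rw [map_mul, map_mul]
  noncomm_ring

instance : Ring (StrictlyPureProduct β rC Y) where
  __ := (inferInstance : AddCommGroup (StrictlyPureProduct β rC Y))
  mul_assoc p q u := shear_injective β rC Y (by simp only [shear_mul, mul_assoc])
  left_distrib p q u := shear_injective β rC Y (by simp only [shear_mul, map_add, mul_add])
  right_distrib p q u := shear_injective β rC Y (by simp only [shear_mul, map_add, add_mul])
  zero_mul p := shear_injective β rC Y (by simp only [shear_mul, map_zero, zero_mul])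
  mul_zero p := shear_injective β rC Y (by simp only [shear_mul, map_zero, mul_zero])
  one_mul p := shear_injective β rC Y (by simp only [shear_mul, shear_one, one_mul])
  mul_one p := shear_injective β rC Y (by simp only [shear_mul, shear_one, mul_one])

/-- `shear` as a ring homomorphism, along which the inclusions of `C` and `D` are pulled back. -/
def shearHom : StrictlyPureProduct β rC Y →+* C × D where
  __ := shear β rC Y
  map_one' := shear_one β rC Y
  map_mul' := shear_mul β rC Y

/-- The inclusion `C → M`, `c ↦ (c, 0)`. -/
def inl : C →+* StrictlyPureProduct β rC Y :=
  ringHomOfInjective (shearHom β rC Y) (shear_injective β rC Y)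
    ((RingHom.id C).prod (β.comp rC)) (fun c => (c, 0))
    fun c => Prod.ext rfl (add_zero (β (rC c)))

theorem inl_injective : Function.Injective (inl β rC Y) :=
  fun _ _ h => congrArg Prod.fst h

variable {rC Y} {α : R →+* C} (hα : Function.LeftInverse rC α) (rD : D →+* R)
  (hrD : ∀ d, d - β (rD d) ∈ Y)

/-- The inclusion `D → M`, `d ↦ (α(r_D d), d − β(r_D d))`. In the coordinates of `shear` it is
`d ↦ (α(r_D d), d)`. -/
def inr : D →+* StrictlyPureProduct β rC Y :=
  ringHomOfInjective (shearHom β rC Y) (shear_injective β rC Y)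
    ((α.comp rD).prod (RingHom.id D)) (fun d => (α (rD d), ⟨d - β (rD d), hrD d⟩))
    fun d => Prod.ext rfl (by
      change β (rC (α (rD d))) + (d - β (rD d)) = d
      rw [hα, add_sub_cancel])

theorem shearHom_inr (d : D) : shearHom β rC Y (inr β hα rD hrD d) = (α (rD d), d) :=
  apply_ringHomOfInjective ..

theorem inr_injective : Function.Injective (inr β hα rD hrD) := by
  intro d d' h
  have h_shear := congrArg (shearHom β rC Y) h
  rw [shearHom_inr, shearHom_inr] at h_shear
  exact congrArg Prod.snd h_shear

end StrictlyPureProduct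

end Product

/-- Given strictly pure extensions `α : R → C`, `β : R → D` with ideal complements `X`, `Y`
and retractions `r_C`, `r_D`, the multiplication `pureMul` on `M := C × Y` is biadditive and
associative with two-sided identity `(1, 0)`, so `M` is a ring; moreover `c ↦ (c, 0)` and
`d ↦ (α(r_D d), d − β(r_D d))` are injective ring homomorphisms `C → M` and `D → M`. -/
theorem strictly_pure_ncTensor_is_ring
    {R C D : Type*} [Ring R] [Ring C] [Ring D]
    (α : R →+* C) (β : R →+* D) (hα : Function.Injective α) (hβ : Function.Injective β)
    (X : TwoSidedIdeal C) (Y : TwoSidedIdeal D)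
    (hdisjC : ∀ r : R, α r ∈ X → α r = 0) (hdisjD : ∀ r : R, β r ∈ Y → β r = 0)
    (rC : C → R) (rD : D → R)
    (hrC : ∀ c : C, c - α (rC c) ∈ X) (hrD : ∀ d : D, d - β (rD d) ∈ Y) :
    (∀ p q u : C × Y, pureMul β rC Y (pureMul β rC Y p q) u =
      pureMul β rC Y p (pureMul β rC Y q u)) ∧
    (∀ p q u : C × Y, pureMul β rC Y p (q + u) = pureMul β rC Y p q + pureMul β rC Y p u) ∧
    (∀ p q u : C × Y, pureMul β rC Y (p + q) u = pureMul β rC Y p u + pureMul β rC Y q u) ∧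
    (∀ p : C × Y, pureMul β rC Y (((1 : C), (0 : Y))) p = p ∧
      pureMul β rC Y p (((1 : C), (0 : Y))) = p) ∧
    (Function.Injective (fun c : C => ((c, (0 : Y)) : C × Y))) ∧
    (∀ c c' : C, ((c + c', (0 : Y)) : C × Y) = (c, (0 : Y)) + (c', (0 : Y))) ∧
    ((((1 : C), (0 : Y)) : C × Y) = ((1 : C), (0 : Y))) ∧
    (∀ c c' : C, ((c * c', (0 : Y)) : C × Y) =
      pureMul β rC Y ((c, (0 : Y)) : C × Y) ((c', (0 : Y)) : C × Y)) ∧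
    (Function.Injective
      (fun d : D => ((α (rD d), ⟨d - β (rD d), hrD d⟩) : C × Y))) ∧
    (∀ d d' : D, ((α (rD (d + d')), ⟨d + d' - β (rD (d + d')), hrD _⟩) : C × Y) =
      (α (rD d), ⟨d - β (rD d), hrD d⟩) + (α (rD d'), ⟨d' - β (rD d'), hrD d'⟩)) ∧
    (((α (rD 1), ⟨1 - β (rD 1), hrD 1⟩) : C × Y) = (((1 : C), (0 : Y)) : C × Y)) ∧
    (∀ d d' : D, ((α (rD (d * d')), ⟨d * d' - β (rD (d * d')), hrD _⟩) : C × Y) =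
      pureMul β rC Y ((α (rD d), ⟨d - β (rD d), hrD d⟩) : C × Y)
        ((α (rD d'), ⟨d' - β (rD d'), hrD d'⟩) : C × Y)) := by
  obtain ⟨rC, hα_left, rfl⟩ : ∃ f : C →+* R, Function.LeftInverse f α ∧ ⇑f = rC :=
    ⟨retraction α hα X hdisjC rC hrC, leftInverse_retraction α hα X hdisjC rC hrC, rfl⟩
  obtain ⟨rD, rfl⟩ : ∃ f : D →+* R, ⇑f = rD := ⟨retraction β hβ Y hdisjD rD hrD, rfl⟩
  let M := StrictlyPureProduct β rC Y
  let ιC : C →+* M := StrictlyPureProduct.inl β rC Y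
  let ιD : D →+* M := StrictlyPureProduct.inr β hα_left rD hrD
  exact ⟨mul_assoc (G := M), mul_add (R := M), add_mul (R := M),
    fun p => ⟨one_mul (M := M) p, mul_one (M := M) p⟩,
    StrictlyPureProduct.inl_injective β rC Y, map_add ιC, map_one ιC, map_mul ιC,
    StrictlyPureProduct.inr_injective β hα_left rD hrD, map_add ιD, map_one ιD, map_mul ιD⟩
end

section
/- Let R, C, D be rings, α : R → C and β : R → D injective unital ring homomorphisms, X a two-sided ideal of C and Y a two-sided ideal of D such that additively C = α(R) ⊕ X and D = β(R) ⊕ Y (i.e. α(R) ∩ X = 0 and α(R) + X = C, and similarly for D). Let r_D : D → R be the additive map determined by d − β(r_D(d)) ∈ Y. Then the sequence of additive abelian groups 0 → R → C ⊕ D → C × Y → 0 is exact, where the first map is r ↦ (α(r), β(r)) and the second map is (c, d) ↦ (c − α(r_D(d)), −(d − β(r_D(d)))). -/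
/-! A complement `Y` of `β(R)` in `D` determines the retraction `ρ : D → R`: the value `ρ d` is the
only `r` with `d - β r ∈ Y`. So `ρ` is left inverse to `β` and vanishes on `Y`. The pair `(c, d)` is
killed by the second map precisely when `(c, d) = (α (ρ d), β (ρ d))`, which `ρ ∘ β = id` identifies
with the diagonal image of `R`; and `(c, y)` is the image of `(c, -y)` since `ρ (-y) = 0`. -/

section Retraction

variable {R D S : Type*} [AddGroup R] [AddGroup D] [SetLike S D] [AddSubgroupClass S D]
  {β : R →+ D} {Y : S} {ρ : D → R}

theorem retraction_eq_iff_sub_mem (hβY : ∀ r, β r ∈ Y → r = 0) (hρ : ∀ d, d - β (ρ d) ∈ Y)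
    {d : D} {r : R} : ρ d = r ↔ d - β r ∈ Y := by
  refine ⟨fun h => h ▸ hρ d, fun h => sub_eq_zero.mp (hβY _ ?_)⟩
  have hdiff : -(d - β (ρ d)) + (d - β r) = β (ρ d - r) := by
    rw [neg_sub, sub_add_sub_cancel, map_sub]
  exact hdiff ▸ add_mem (neg_mem (hρ d)) h

theorem retraction_leftInverse (hβY : ∀ r, β r ∈ Y → r = 0) (hρ : ∀ d, d - β (ρ d) ∈ Y) :
    Function.LeftInverse ρ β := fun r =>
  (retraction_eq_iff_sub_mem hβY hρ).mpr (by rw [sub_self]; exact zero_mem Y)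

theorem retraction_eq_zero_iff_mem (hβY : ∀ r, β r ∈ Y → r = 0) (hρ : ∀ d, d - β (ρ d) ∈ Y)
    {d : D} : ρ d = 0 ↔ d ∈ Y := by
  rw [retraction_eq_iff_sub_mem hβY hρ, map_zero, sub_zero]

end Retraction

section DifferenceMap

variable {R C D S : Type*} [AddGroup R] [AddGroup C] [AddGroup D] [SetLike S D]
  [AddSubgroupClass S D] (α : R →+ C) {β : R →+ D} {Y : S} {ρ : D → R}

/-- The map `(c, d) ↦ c·1 - 1·d` of the exact context, in the coordinates `C × Y`: as `d` is
`β (ρ d)` plus an element of `Y`, its `R`-part is subtracted from `c` through `α` and its `Y`-part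
changes sign. The proof `hρ` is an argument because the second coordinate carries its membership in
`Y`. -/
def differenceMap (hρ : ∀ d, d - β (ρ d) ∈ Y) (p : C × D) : C × Y :=
  (p.1 - α (ρ p.2), ⟨-(p.2 - β (ρ p.2)), neg_mem (hρ p.2)⟩)

theorem differenceMap_eq_zero_iff (hρ : ∀ d, d - β (ρ d) ∈ Y) (p : C × D) :
    differenceMap α hρ p = 0 ↔ (α (ρ p.2), β (ρ p.2)) = p := by
  simp only [differenceMap, Prod.ext_iff, Subtype.ext_iff, Prod.fst_zero, Prod.snd_zero,
    ZeroMemClass.coe_zero, neg_eq_zero, sub_eq_zero]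
  exact and_congr eq_comm eq_comm

theorem exact_prod_differenceMap (hβY : ∀ r, β r ∈ Y → r = 0) (hρ : ∀ d, d - β (ρ d) ∈ Y) :
    Function.Exact (fun r => (α r, β r)) (differenceMap α hρ) := fun p => by
  rw [differenceMap_eq_zero_iff]
  refine ⟨fun h => ⟨ρ p.2, h⟩, ?_⟩
  rintro ⟨r, rfl⟩
  rw [retraction_leftInverse hβY hρ r]

theorem differenceMap_surjective (hβY : ∀ r, β r ∈ Y → r = 0) (hρ : ∀ d, d - β (ρ d) ∈ Y) :
    Function.Surjective (differenceMap α hρ) := by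
  rintro ⟨c, y, hy⟩
  have hρy : ρ (-y) = 0 := (retraction_eq_zero_iff_mem hβY hρ).mpr (neg_mem hy)
  refine ⟨(c, -y), Prod.ext ?_ (Subtype.ext ?_)⟩ <;>
    simp only [differenceMap, hρy, map_zero, sub_zero, neg_neg]

theorem strictly_pure_exact_sequence_general (hβY : ∀ r, β r ∈ Y → r = 0)
    (hρ : ∀ d, d - β (ρ d) ∈ Y) :
    Function.Injective (fun r => (α r, β r)) ∧
    Function.Exact (fun r => (α r, β r)) (differenceMap α hρ) ∧
    Function.Surjective (differenceMap α hρ) :=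
  ⟨fun _ _ h => (retraction_leftInverse hβY hρ).injective (congrArg Prod.snd h),
    exact_prod_differenceMap α hβY hρ, differenceMap_surjective α hβY hρ⟩

end DifferenceMap

/-- Given two strictly pure extensions `α : R → C` and `β : R → D`, with two-sided ideal
complements `X ⊆ C` and `Y ⊆ D` and retractions `r_C : C → R`, `r_D : D → R`, the sequence
of additive groups `0 → R → C ⊕ D → C × Y → 0` is exact, where the first map is
`r ↦ (α r, β r)` and the second map is `(c, d) ↦ (c − α(r_D d), −(d − β(r_D d)))`. -/
theorem strictly_pure_exact_sequence
    {R C D : Type*} [Ring R] [Ring C] [Ring D]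
    (α : R →+* C) (β : R →+* D) (hα : Function.Injective α) (hβ : Function.Injective β)
    (X : TwoSidedIdeal C) (Y : TwoSidedIdeal D)
    (hdisjC : ∀ r : R, α r ∈ X → α r = 0) (hdisjD : ∀ r : R, β r ∈ Y → β r = 0)
    (rC : C → R) (rD : D → R)
    (hrC : ∀ c : C, c - α (rC c) ∈ X) (hrD : ∀ d : D, d - β (rD d) ∈ Y) :
    Function.Injective (fun r : R => ((α r, β r) : C × D)) ∧
    Function.Exact
      (fun r : R => ((α r, β r) : C × D))
      (fun p : C × D =>
        ((p.1 - α (rD p.2), ⟨-(p.2 - β (rD p.2)), Y.neg_mem (hrD p.2)⟩) : C × Y)) ∧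
    Function.Surjective
      (fun p : C × D =>
        ((p.1 - α (rD p.2), ⟨-(p.2 - β (rD p.2)), Y.neg_mem (hrD p.2)⟩) : C × Y)) :=
  strictly_pure_exact_sequence_general (α : R →+ C) (β := (β : R →+ D))
    (fun r hr => (map_eq_zero_iff β hβ).mp (hdisjD r hr)) hrD
end
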